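/- Let w ≥ τ in S_n/(S_d × S_{n-d}). The number of sets S of reflections satisfying (S1) and maximal with respect to (S1) equals the number of families (P_1,…,P_d) of non-intersecting north-east lattice paths where P_ℓ runs from (d+1−ℓ, d) to (d−κ_{σ(ℓ)}, κ_{σ(ℓ)}+i_{σ(ℓ)}). -/

import Mathlib

def NEStep (p q : ℤ × ℤ) : Prop := q = (p.1 + 1, p.2) ∨ q = (p.1, p.2 + 1)

def IsNEPathFrom (P : List (ℤ × ℤ)) (A E : ℤ × ℤ) : Prop :=
  P.head? = some A ∧ P.getLast? = some E ∧ List.Chain' NEStep P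

def applySwaps (L : List (ℕ × ℕ)) (x : ℕ) : ℕ :=
  L.foldr (fun s y => if y = s.1 then s.2 else if y = s.2 then s.1 else y) x

def sortedFirstVals (d : ℕ) (f : ℕ → ℕ) : List ℕ :=
  ((Finset.Icc 1 d).image f).sort (· ≤ ·)

def DominatedByW (d : ℕ) (f i : ℕ → ℕ) : Prop :=
  ∀ k, k < d → (sortedFirstVals d f).getD k 0 ≤ i (k + 1)

def S1Prop (d : ℕ) (τ i : ℕ → ℕ) (S : Multiset (ℕ × ℕ)) : Prop :=
  ∀ L : List (ℕ × ℕ), (∀ s ∈ L, s ∈ S) →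
    L.Pairwise (fun a b => a.1 < b.1 ∧ b.2 < a.2) →
    DominatedByW d (fun x => τ (applySwaps L x)) i

/-!
A list of pairwise commuting reflections is a nest of pairs `(a, b)`, that is, an antichain for the
product order on `ℕ × ℕ`. Counting the values at most `m = i_q` among the first `d` positions,
before and after multiplication by the nest, turns (S1) into a bound for antichains: at most
`(d - κ_q) - q` elements of an antichain of `S` can lie to the north-west of the endpoint
`E_q = (d - κ_q, κ_q + m)`.

A lattice path is a chain, so it meets an antichain at most once. In a non-intersecting family the
`q` paths that end weakly below `E_q` avoid the antichain, and only `d - κ_q` paths start weakly to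
the left of `E_q`. Hence the set of reflections visited by a family satisfies (S1). Conversely, if
`S` satisfies (S1), then a family covering `S` is routed greedily, row by row from below: each path
runs east through the points of `S` and the endpoints that precede the start of the next path, then
turns north. The antichain bounds, in a form that allows arbitrary starts, pass to the next row.

All families visit the same number of points, and a family is determined by the points it visits.
So the maximal sets with (S1) are exactly the sets visited by the families, each by a single one.
-/

open scoped Finset

section Order

theorem setOf_maximal_eq_image {α β : Type*} [PartialOrder α] {p : α → Prop} {f : β → α}
    {s : Set β} (hp : ∀ b ∈ s, p (f b)) (hcofinal : ∀ a, p a → ∃ b ∈ s, a ≤ f b)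
    (heq : ∀ b ∈ s, ∀ c ∈ s, f b ≤ f c → b = c) : {a | Maximal p a} = f '' s := by
  ext a
  constructor
  · intro ha
    obtain ⟨b, hb, hab⟩ := hcofinal a ha.prop
    exact ⟨b, hb, (ha.eq_of_le (hp b hb) hab).symm⟩
  · rintro ⟨b, hb, rfl⟩
    refine ⟨hp b hb, fun a ha hba => ?_⟩
    obtain ⟨c, hc, hac⟩ := hcofinal a ha
    obtain rfl := heq b hb c hc (hba.trans hac)
    exact hac

theorem injOn_fst_of_isAntichain {α β : Type*} [Preorder α] [LinearOrder β] {s : Set (α × β)}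
    (hs : IsAntichain (· ≤ ·) s) : Set.InjOn Prod.fst s := by
  intro x hx y hy hxy
  rcases le_total x.2 y.2 with h | h
  · exact hs.eq hx hy ⟨hxy.le, h⟩
  · exact (hs.eq hy hx ⟨hxy.ge, h⟩).symm

theorem card_le_card_of_isAntichain {α β : Type*} [Preorder α] [LinearOrder β]
    {C : Finset (α × β)} (hC : IsAntichain (· ≤ ·) (C : Set (α × β))) {s : Finset α}
    (hs : ∀ x ∈ C, x.1 ∈ s) : #C ≤ #s :=
  Finset.card_le_card_of_injOn Prod.fst hs (injOn_fst_of_isAntichain hC)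

end Order

section Paths

variable {P Q : List (ℤ × ℤ)} {A B B' E x y : ℤ × ℤ}

theorem NEStep.lt (h : NEStep x y) : x < y := by
  rcases h with rfl | rfl
  · exact Prod.lt_iff.2 (Or.inl ⟨by simp, le_rfl⟩)
  · exact Prod.lt_iff.2 (Or.inr ⟨le_rfl, by simp⟩)

namespace IsNEPathFrom

theorem start_mem (h : IsNEPathFrom P A E) : A ∈ P :=
  List.mem_of_head? h.1

theorem end_mem (h : IsNEPathFrom P A E) : E ∈ P :=
  List.mem_of_getLast? h.2.1

theorem pairwise_lt (h : IsNEPathFrom P A E) : P.Pairwise (· < ·) :=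
  List.isChain_iff_pairwise.1 (List.IsChain.imp (fun _ _ => NEStep.lt) h.2.2)

theorem nodup (h : IsNEPathFrom P A E) : P.Nodup :=
  h.pairwise_lt.imp ne_of_lt

theorem start_le (h : IsNEPathFrom P A E) (hx : x ∈ P) : A ≤ x := by
  obtain ⟨l, rfl⟩ := List.head?_eq_some_iff.1 h.1
  rcases List.mem_cons.1 hx with rfl | hxl
  · exact le_rfl
  · exact ((List.pairwise_cons.1 h.pairwise_lt).1 x hxl).le

theorem le_end (h : IsNEPathFrom P A E) (hx : x ∈ P) : x ≤ E := by
  obtain ⟨l, rfl⟩ := List.getLast?_eq_some_iff.1 h.2.1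
  rcases List.mem_append.1 hx with hxl | hxE
  · exact ((List.pairwise_append.1 h.pairwise_lt).2.2 x hxl E (by simp)).le
  · exact (List.mem_singleton.1 hxE).le

theorem le_total (h : IsNEPathFrom P A E) (hx : x ∈ P) (hy : y ∈ P) : x ≤ y ∨ y ≤ x := by
  obtain ⟨j, hj, rfl⟩ := List.getElem_of_mem hx
  obtain ⟨k, hk, rfl⟩ := List.getElem_of_mem hy
  have hlt := List.pairwise_iff_getElem.1 h.pairwise_lt
  rcases lt_trichotomy j k with hjk | rfl | hkj
  · exact Or.inl (hlt j k hj hk hjk).le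
  · exact Or.inl le_rfl
  · exact Or.inr (hlt k j hk hj hkj).le

theorem append (hP : IsNEPathFrom P A B) (hQ : IsNEPathFrom Q B' E) (hstep : NEStep B B') :
    IsNEPathFrom (P ++ Q) A E := by
  refine ⟨by simp [List.head?_append, hP.1], by simp [List.getLast?_append, hQ.2.1],
    List.isChain_append.2 ⟨hP.2.2, hQ.2.2, fun x hx y hy => ?_⟩⟩
  rw [hP.2.1, Option.mem_some_iff] at hx
  rw [hQ.1, Option.mem_some_iff] at hy
  rwa [← hx, ← hy]

theorem length_eq (h : IsNEPathFrom P A E) :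
    (P.length : ℤ) = E.1 + E.2 - (A.1 + A.2) + 1 := by
  induction P generalizing A with
  | nil => simp [IsNEPathFrom] at h
  | cons a l ih =>
    obtain ⟨hA, hE, hchain⟩ := h
    obtain rfl : a = A := by simpa using hA
    cases l with
    | nil =>
      obtain rfl : a = E := by simpa using hE
      simp
    | cons b l =>
      obtain ⟨hstep, htail⟩ := List.isChain_cons_cons.1 hchain
      have hlen := ih ⟨rfl, by simpa using hE, htail⟩
      rw [List.length_cons, Nat.cast_succ, hlen]
      rcases hstep with rfl | rfl <;> ring

end IsNEPathFrom

/-- The horizontal lattice path from `(t, c)` east to `(u, c)`, meaningful for `t ≤ u`. -/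
def eastSegment (t u c : ℤ) : List (ℤ × ℤ) :=
  (List.range ((u - t).toNat + 1)).map fun k : ℕ => (t + (k : ℤ), c)

theorem mem_eastSegment {t u c : ℤ} (h : t ≤ u) :
    x ∈ eastSegment t u c ↔ t ≤ x.1 ∧ x.1 ≤ u ∧ x.2 = c := by
  simp only [eastSegment, List.mem_map, List.mem_range]
  constructor
  · rintro ⟨k, hk, rfl⟩
    dsimp only
    omega
  · rintro ⟨htx, hxu, hxc⟩
    exact ⟨(x.1 - t).toNat, by omega, Prod.ext (by dsimp only; omega) hxc.symm⟩

theorem isNEPathFrom_eastSegment {t u c : ℤ} (h : t ≤ u) :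
    IsNEPathFrom (eastSegment t u c) (t, c) (u, c) := by
  refine ⟨by simp [eastSegment, List.range_succ_eq_map], ?_, ?_⟩
  · simp [eastSegment, List.range_succ, h]
  · refine (List.isChain_map _).2 ((List.isChain_range _ _).2 fun k _ => Or.inl ?_)
    simp [add_assoc]

end Paths

section PathFamilies

variable {ι : Type*} {A E : ι → ℤ × ℤ} {P Q : ι → List (ℤ × ℤ)} {x x' y y' : ℤ × ℤ}

/-- A family of pairwise disjoint north-east paths from the points `A` to the points `E`. The
permutation matching starts with ends is existentially quantified. -/
def IsPathFamily (A E : ι → ℤ × ℤ) (P : ι → List (ℤ × ℤ)) : Prop :=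
  ∃ σ : Equiv.Perm ι, (∀ ℓ, IsNEPathFrom (P ℓ) (A ℓ) (E (σ ℓ))) ∧
    ∀ k l, k ≠ l → ∀ p ∈ P k, p ∉ P l

theorem isPathFamily_of_forall_exists [Finite ι]
    (hpath : ∀ ℓ, ∃ q, IsNEPathFrom (P ℓ) (A ℓ) (E q))
    (hdisj : ∀ k l, k ≠ l → ∀ p ∈ P k, p ∉ P l) : IsPathFamily A E P := by
  choose σ hσ using hpath
  have hinj : Function.Injective σ := fun k l hkl => by
    by_contra hne
    exact hdisj k l hne _ (hσ k).end_mem (hkl ▸ (hσ l).end_mem)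
  exact ⟨Equiv.ofBijective σ (Finite.injective_iff_bijective.1 hinj), hσ, hdisj⟩

/-- The lattice points covered by a family of paths. -/
def vertices [Fintype ι] (P : ι → List (ℤ × ℤ)) : Finset (ℤ × ℤ) :=
  Finset.univ.biUnion fun ℓ => (P ℓ).toFinset

theorem mem_vertices [Fintype ι] : x ∈ vertices P ↔ ∃ ℓ, x ∈ P ℓ := by
  simp [vertices]

/-- `IsEdge P x y` says that some path of the family `P` steps from `x` to `y`. -/
def IsEdge (P : ι → List (ℤ × ℤ)) (x y : ℤ × ℤ) : Prop :=
  ∃ ℓ k, (P ℓ)[k]? = some x ∧ (P ℓ)[k + 1]? = some y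

namespace IsEdge

theorem left_mem_vertices [Fintype ι] (h : IsEdge P x y) : x ∈ vertices P := by
  obtain ⟨ℓ, k, hx, -⟩ := h
  exact mem_vertices.2 ⟨ℓ, List.mem_of_getElem? hx⟩

theorem right_mem_vertices [Fintype ι] (h : IsEdge P x y) : y ∈ vertices P := by
  obtain ⟨ℓ, k, -, hy⟩ := h
  exact mem_vertices.2 ⟨ℓ, List.mem_of_getElem? hy⟩

end IsEdge

namespace IsPathFamily

theorem index_unique (hP : IsPathFamily A E P) {ℓ ℓ' : ι} {k k' : ℕ}
    (h : (P ℓ)[k]? = some x) (h' : (P ℓ')[k']? = some x) : ℓ = ℓ' ∧ k = k' := by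
  obtain ⟨σ, hpath, hdisj⟩ := hP
  obtain rfl : ℓ = ℓ' := by
    by_contra hne
    exact hdisj ℓ ℓ' hne x (List.mem_of_getElem? h) (List.mem_of_getElem? h')
  obtain ⟨hk, -⟩ := List.getElem?_eq_some_iff.1 h
  exact ⟨rfl, (List.getElem?_inj hk (hpath ℓ).nodup).1 (h.trans h'.symm)⟩

theorem step_of_isEdge (hP : IsPathFamily A E P) (h : IsEdge P x y) : NEStep x y := by
  obtain ⟨σ, hpath, -⟩ := hP
  obtain ⟨ℓ, k, hx, hy⟩ := h
  obtain ⟨_, rfl⟩ := List.getElem?_eq_some_iff.1 hx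
  obtain ⟨hk, rfl⟩ := List.getElem?_eq_some_iff.1 hy
  exact List.isChain_iff_getElem.1 (hpath ℓ).2.2 k hk

theorem isEdge_left_unique (hP : IsPathFamily A E P) (h : IsEdge P x y) (h' : IsEdge P x' y) :
    x = x' := by
  obtain ⟨ℓ, k, hx, hy⟩ := h
  obtain ⟨ℓ', k', hx', hy'⟩ := h'
  obtain ⟨rfl, hk⟩ := hP.index_unique hy hy'
  obtain rfl := Nat.succ.inj hk
  exact Option.some.inj (hx.symm.trans hx')

theorem isEdge_right_unique (hP : IsPathFamily A E P) (h : IsEdge P x y) (h' : IsEdge P x y') :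
    y = y' := by
  obtain ⟨ℓ, k, hx, hy⟩ := h
  obtain ⟨ℓ', k', hx', hy'⟩ := h'
  obtain ⟨rfl, rfl⟩ := hP.index_unique hx hx'
  exact Option.some.inj (hy.symm.trans hy')

theorem ne_end_of_isEdge (hP : IsPathFamily A E P) (h : IsEdge P x y) (q : ι) : x ≠ E q := by
  rintro rfl
  obtain ⟨ℓ, k, hx, hy⟩ := h
  have ⟨σ, hpath, _⟩ := hP
  have hlast := (hpath (σ.symm q)).2.1
  rw [Equiv.apply_symm_apply, List.getLast?_eq_getElem?] at hlast
  obtain ⟨rfl, hk⟩ := hP.index_unique hx hlast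
  obtain ⟨hk', -⟩ := List.getElem?_eq_some_iff.1 hy
  omega

theorem ne_start_of_isEdge (hP : IsPathFamily A E P) (h : IsEdge P x y) (q : ι) : y ≠ A q := by
  rintro rfl
  obtain ⟨ℓ, k, -, hy⟩ := h
  have ⟨σ, hpath, _⟩ := hP
  have hhead := (hpath q).1
  rw [List.head?_eq_getElem?] at hhead
  exact Nat.succ_ne_zero k (hP.index_unique hy hhead).2

theorem getElem?_succ_of_isEdge_imp (hQ : IsPathFamily A E Q)
    (hedge : ∀ x y, IsEdge P x y → IsEdge Q x y) {ℓ : ι} {k : ℕ}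
    (hk : (P ℓ)[k]? = (Q ℓ)[k]?) (hy : (P ℓ)[k + 1]? = some y) : (Q ℓ)[k + 1]? = some y := by
  obtain ⟨hlt, -⟩ := List.getElem?_eq_some_iff.1 hy
  have hx : (P ℓ)[k]? = some (P ℓ)[k] := List.getElem?_eq_getElem (by omega)
  obtain ⟨ℓ', k', hx', hy'⟩ := hedge _ _ ⟨ℓ, k, hx, hy⟩
  obtain ⟨rfl, rfl⟩ := hQ.index_unique (hk ▸ hx) hx'
  exact hy'

variable [Fintype ι]

theorem exists_isEdge_right (hP : IsPathFamily A E P) (hx : x ∈ vertices P) (hE : ∀ q, x ≠ E q) :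
    ∃ y, IsEdge P x y := by
  obtain ⟨ℓ, hxℓ⟩ := mem_vertices.1 hx
  obtain ⟨k, hk, rfl⟩ := List.getElem_of_mem hxℓ
  obtain ⟨σ, hpath, -⟩ := hP
  by_cases hk' : k + 1 < (P ℓ).length
  · exact ⟨_, ℓ, k, List.getElem?_eq_getElem hk, List.getElem?_eq_getElem hk'⟩
  · have hlast := (hpath ℓ).2.1
    rw [List.getLast?_eq_getElem?, show (P ℓ).length - 1 = k by omega,
      List.getElem?_eq_getElem hk] at hlast
    exact absurd (Option.some.inj hlast) (hE _)

theorem exists_isEdge_left (hP : IsPathFamily A E P) (hy : y ∈ vertices P) (hA : ∀ q, y ≠ A q) :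
    ∃ x, IsEdge P x y := by
  obtain ⟨ℓ, hyℓ⟩ := mem_vertices.1 hy
  obtain ⟨k, hk, rfl⟩ := List.getElem_of_mem hyℓ
  obtain ⟨σ, hpath, -⟩ := hP
  cases k with
  | zero =>
    have hhead := (hpath ℓ).1
    rw [List.head?_eq_getElem?, List.getElem?_eq_getElem hk] at hhead
    exact absurd (Option.some.inj hhead) (hA _)
  | succ k =>
    exact ⟨_, ℓ, k, List.getElem?_eq_getElem (by omega), List.getElem?_eq_getElem hk⟩

open Classical in
/-- If `P` goes east from `(a, b)` but `Q` does not, then `Q` enters `(a + 1, b)` from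
`(a + 1, b - 1)`, a point where `P` must again go east: a counterexample further to the right. -/
theorem isEdge_east_of_vertices_eq (hP : IsPathFamily A E P) (hQ : IsPathFamily A E Q)
    (hPQ : vertices P = vertices Q) (h : IsEdge P x (x.1 + 1, x.2)) :
    IsEdge Q x (x.1 + 1, x.2) := by
  by_contra hx
  obtain ⟨⟨a, b⟩, hz, hmax⟩ := Finset.exists_max_image
    {z ∈ vertices P | IsEdge P z (z.1 + 1, z.2) ∧ ¬ IsEdge Q z (z.1 + 1, z.2)} Prod.fst
    ⟨x, Finset.mem_filter.2 ⟨h.left_mem_vertices, h, hx⟩⟩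
  obtain ⟨-, hPz, hQz⟩ := Finset.mem_filter.1 hz
  obtain ⟨w, hQw⟩ := hQ.exists_isEdge_left (hPQ ▸ hPz.right_mem_vertices)
    (hP.ne_start_of_isEdge hPz)
  have hwP : w ∈ vertices P := hPQ ▸ hQw.left_mem_vertices
  obtain ⟨y, hPw⟩ := hP.exists_isEdge_right hwP (hQ.ne_end_of_isEdge hQw)
  rcases hQ.step_of_isEdge hQw with hw | hw <;> simp only [Prod.mk.injEq] at hw
  · obtain rfl : w = (a, b) := Prod.ext (by dsimp only; omega) hw.2.symm
    exact hQz hQw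
  · have hQw' : ¬ IsEdge Q w (w.1 + 1, w.2) := fun hQe => by
      have := congrArg Prod.snd (hQ.isEdge_right_unique hQw hQe)
      dsimp only at this
      omega
    rcases hP.step_of_isEdge hPw with rfl | rfl
    · have := hmax w (Finset.mem_filter.2 ⟨hwP, hPw, hQw'⟩)
      dsimp only at this
      omega
    · rw [← hw.1, ← hw.2] at hPw
      have := congrArg Prod.fst (hP.isEdge_left_unique hPz hPw)
      dsimp only at this
      omega

theorem isEdge_of_vertices_eq (hP : IsPathFamily A E P) (hQ : IsPathFamily A E Q)
    (hPQ : vertices P = vertices Q) (h : IsEdge P x y) : IsEdge Q x y := by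
  rcases hP.step_of_isEdge h with rfl | rfl
  · exact hP.isEdge_east_of_vertices_eq hQ hPQ h
  · obtain ⟨y, hQx⟩ := hQ.exists_isEdge_right (hPQ ▸ h.left_mem_vertices) (hP.ne_end_of_isEdge h)
    rcases hQ.step_of_isEdge hQx with rfl | rfl
    · have hPx := hQ.isEdge_east_of_vertices_eq hP hPQ.symm hQx
      have := congrArg Prod.fst (hP.isEdge_right_unique h hPx)
      dsimp only at this
      omega
    · exact hQx

theorem eq_of_vertices_eq (hP : IsPathFamily A E P) (hQ : IsPathFamily A E Q)
    (hPQ : vertices P = vertices Q) : P = Q := by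
  funext ℓ
  refine List.ext_getElem? fun k => ?_
  induction k with
  | zero =>
    obtain ⟨_, hpathP, -⟩ := hP
    obtain ⟨_, hpathQ, -⟩ := hQ
    rw [← List.head?_eq_getElem?, ← List.head?_eq_getElem?, (hpathP ℓ).1, (hpathQ ℓ).1]
  | succ k ih =>
    refine Option.ext fun y => ⟨?_, ?_⟩
    · exact hQ.getElem?_succ_of_isEdge_imp (fun _ _ => hP.isEdge_of_vertices_eq hQ hPQ) ih
    · exact hP.getElem?_succ_of_isEdge_imp (fun _ _ => hQ.isEdge_of_vertices_eq hP hPQ.symm) ih.symm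

theorem card_vertices (hP : IsPathFamily A E P) :
    (#(vertices P) : ℤ) = ∑ q, ((E q).1 + (E q).2 + 1) - ∑ ℓ, ((A ℓ).1 + (A ℓ).2) := by
  obtain ⟨σ, hpath, hdisj⟩ := hP
  have hcard (ℓ : ι) : (#(P ℓ).toFinset : ℤ) =
      ((E (σ ℓ)).1 + (E (σ ℓ)).2 + 1) - ((A ℓ).1 + (A ℓ).2) := by
    rw [List.toFinset_card_of_nodup (hpath ℓ).nodup, (hpath ℓ).length_eq]
    ring
  rw [vertices, Finset.card_biUnion fun k _ l _ hkl => ?_]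
  · rw [Nat.cast_sum, Finset.sum_congr rfl fun ℓ _ => hcard ℓ, Finset.sum_sub_distrib,
      Equiv.sum_comp σ fun q => (E q).1 + (E q).2 + 1]
  · refine Finset.disjoint_left.2 fun p hpk hpl => ?_
    exact hdisj k l hkl p (List.mem_toFinset.1 hpk) (List.mem_toFinset.1 hpl)

theorem eq_of_vertices_subset (hP : IsPathFamily A E P) (hQ : IsPathFamily A E Q)
    (hPQ : vertices P ⊆ vertices Q) : P = Q := by
  refine hP.eq_of_vertices_eq hQ (Finset.eq_of_subset_of_card_le hPQ (le_of_eq ?_))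
  exact_mod_cast hQ.card_vertices.trans hP.card_vertices.symm

theorem exists_injOn_mem (hP : IsPathFamily A E P) [Nonempty ι] {C : Finset (ℤ × ℤ)}
    (hC : IsAntichain (· ≤ ·) (C : Set (ℤ × ℤ))) (hCP : C ⊆ vertices P) :
    ∃ f : ℤ × ℤ → ι, Set.InjOn f C ∧ ∀ x ∈ C, x ∈ P (f x) := by
  obtain ⟨σ, hpath, -⟩ := hP
  choose! f hf using fun x (hx : x ∈ C) => mem_vertices.1 (hCP hx)
  refine ⟨f, fun x hx y hy hxy => ?_, hf⟩
  rcases (hpath (f x)).le_total (hf x hx) (hxy ▸ hf y hy) with h | h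
  · exact hC.eq hx hy h
  · exact (hC.eq hy hx h).symm

end IsPathFamily

end PathFamilies

section RowExit

variable {α : Type*} [LinearOrder α] {T X : Finset α} {r t u x y : α}

/-- In a row with starts `T`, the point where the path entering at `t` turns north: it first runs
east through the marked points `X` that it reaches before the next start. -/
def rowExit (T X : Finset α) (t : α) : α :=
  ({y ∈ insert t X | t ≤ y ∧ ∀ u ∈ T, t < u → y < u}).max'
    ⟨t, by simp +contextual⟩

theorem rowExit_mem (T X : Finset α) (t : α) :
    rowExit T X t ∈ {y ∈ insert t X | t ≤ y ∧ ∀ u ∈ T, t < u → y < u} :=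
  Finset.max'_mem _ _

theorem le_rowExit (T X : Finset α) (t : α) : t ≤ rowExit T X t :=
  (Finset.mem_filter.1 (rowExit_mem T X t)).2.1

theorem rowExit_lt (X : Finset α) (hu : u ∈ T) (htu : t < u) : rowExit T X t < u :=
  (Finset.mem_filter.1 (rowExit_mem T X t)).2.2 u hu htu

theorem rowExit_mem_of_lt (h : t < rowExit T X t) : rowExit T X t ∈ X :=
  (Finset.mem_insert.1 (Finset.mem_filter.1 (rowExit_mem T X t)).1).resolve_left h.ne'

theorem rowExit_strictMonoOn (T X : Finset α) : StrictMonoOn (rowExit T X) T :=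
  fun _ _ u hu htu => (rowExit_lt X hu htu).trans_le (le_rowExit T X u)

theorem exists_mem_le_rowExit (hx : x ∈ X) (ht : t ∈ T) (htx : t ≤ x) :
    ∃ u ∈ T, u ≤ x ∧ x ≤ rowExit T X u := by
  obtain ⟨u, hu, hmax⟩ := Finset.exists_max_image {u ∈ T | u ≤ x} id
    ⟨t, Finset.mem_filter.2 ⟨ht, htx⟩⟩
  obtain ⟨huT, hux⟩ := Finset.mem_filter.1 hu
  refine ⟨u, huT, hux, Finset.le_max' _ _ (Finset.mem_filter.2
    ⟨Finset.mem_insert_of_mem hx, hux, fun v hv huv => ?_⟩)⟩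
  by_contra! hvx
  exact huv.not_ge (hmax v (Finset.mem_filter.2 ⟨hv, hvx⟩))

theorem card_filter_le_rowExit (ht : t ∈ T) (htr : t ≤ r) (hr : r < rowExit T X t) :
    #{u ∈ T | u ≤ rowExit T X t} = #{u ∈ T | rowExit T X u ≤ r} + 1 := by
  have hinsert : {u ∈ T | u ≤ rowExit T X t} = insert t {u ∈ T | rowExit T X u ≤ r} := by
    ext u
    simp only [Finset.mem_filter, Finset.mem_insert]
    constructor
    · rintro ⟨hu, hut⟩
      rcases lt_trichotomy u t with h | h | h
      · exact Or.inr ⟨hu, (rowExit_lt X ht h).le.trans htr⟩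
      · exact Or.inl h
      · exact absurd hut (rowExit_lt X hu h).not_ge
    · rintro (rfl | ⟨hu, hur⟩)
      · exact ⟨ht, le_rowExit T X u⟩
      · exact ⟨hu, (le_rowExit T X u).trans (hur.trans hr.le)⟩
  rw [hinsert, Finset.card_insert_of_notMem]
  exact fun h => hr.not_ge (Finset.mem_filter.1 h).2

end RowExit

section Routing

variable {c r t x : ℤ} {p : ℤ × ℤ} {T : Finset ℤ} {U Ends S C F : Finset (ℤ × ℤ)}
  {P : ℤ → List (ℤ × ℤ)}

/-- The first coordinates of the points of `U` at height `c`. -/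
def row (c : ℤ) (U : Finset (ℤ × ℤ)) : Finset ℤ :=
  {p ∈ U | p.2 = c}.image Prod.fst

/-- The points of `U` strictly above height `c`. -/
def above (c : ℤ) (U : Finset (ℤ × ℤ)) : Finset (ℤ × ℤ) :=
  {p ∈ U | c < p.2}

theorem mem_row : x ∈ row c U ↔ (x, c) ∈ U := by
  simp [row]

theorem mem_above : p ∈ above c U ↔ p ∈ U ∧ c < p.2 :=
  Finset.mem_filter

theorem card_filter_row (c : ℤ) (U : Finset (ℤ × ℤ)) (q : ℤ → Prop) [DecidablePred q] :
    #{x ∈ row c U | q x} = #{p ∈ U | p.2 = c ∧ q p.1} := by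
  rw [row, Finset.filter_image, Finset.filter_filter, Finset.card_image_of_injOn]
  intro p hp p' hp' h
  exact Prod.ext h ((Finset.mem_filter.1 hp).2.1.trans (Finset.mem_filter.1 hp').2.1.symm)

/-- The conditions under which disjoint north-east paths can lead from the starts `(t, c)`, for
`t ∈ T`, to the points of `Ends` while covering `S`. -/
structure Routable (c : ℤ) (T : Finset ℤ) (Ends S : Finset (ℤ × ℤ)) : Prop where
  le_snd : ∀ p ∈ S ∪ Ends, c ≤ p.2
  isChain : IsChain (· ≤ ·) (Ends : Set (ℤ × ℤ))
  mem_of_lt : ∀ e ∈ Ends, ∀ p ∈ S ∪ Ends, e.1 < p.1 → p.1 ∈ T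
  card_eq : #T = #Ends
  card_add_card_le : ∀ F ⊆ Ends, ∀ C ⊆ S, IsAntichain (· ≤ ·) (C : Set (ℤ × ℤ)) → ∀ r : ℤ,
    (∀ f ∈ F, f.1 ≤ r) → (∀ x ∈ C, x.1 ≤ r) → (∀ x ∈ C, ∀ f ∈ F, ¬ x ≤ f) →
    #C + #F ≤ #{t ∈ T | t ≤ r}

/-- The turning points of the paths in the lowest row. -/
local notation "exit" => rowExit T (row c (S ∪ Ends))

namespace Routable

theorem exists_mem_le (h : Routable c T Ends S) (hp : p ∈ S ∪ Ends) : ∃ t ∈ T, t ≤ p.1 := by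
  suffices hpos : 0 < #{t ∈ T | t ≤ p.1} by
    obtain ⟨t, ht⟩ := Finset.card_pos.1 hpos
    exact ⟨t, Finset.mem_filter.1 ht⟩
  rcases Finset.mem_union.1 hp with hp | hp
  · simpa using h.card_add_card_le ∅ (by simp) {p} (by simpa) (by simp) p.1 (by simp)
      (by simp) (by simp)
  · simpa using h.card_add_card_le {p} (by simpa) ∅ (by simp) (by simp) p.1 (by simp)
      (by simp) (by simp)

theorem exists_mem_le_exit (h : Routable c T Ends S) (hx : (x, c) ∈ S ∪ Ends) :
    ∃ t ∈ T, t ≤ x ∧ x ≤ exit t := by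
  obtain ⟨t, ht, htx⟩ := h.exists_mem_le hx
  exact exists_mem_le_rowExit (mem_row.2 hx) ht htx

theorem exit_le (h : Routable c T Ends S) {e : ℤ × ℤ} (he : e ∈ Ends) (het : e.1 ≤ t) :
    exit t ≤ t := by
  by_contra! hlt
  have hexit := h.mem_of_lt e he _ (mem_row.1 (rowExit_mem_of_lt hlt)) (het.trans_lt hlt)
  exact (rowExit_lt _ hexit hlt).false

theorem row_subset_image_exit (h : Routable c T Ends S) : row c Ends ⊆ T.image exit := by
  intro x hx
  have hxE := mem_row.1 hx
  obtain ⟨t, ht, htx, hxt⟩ := h.exists_mem_le_exit (Finset.mem_union_right S hxE)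
  refine Finset.mem_image.2 ⟨t, ht, hxt.antisymm' ?_⟩
  by_contra! hlt
  have hexit := h.mem_of_lt _ hxE _ (mem_row.1 (rowExit_mem_of_lt (htx.trans_lt hlt))) hlt
  exact (rowExit_lt _ hexit (htx.trans_lt hlt)).false

/-- The turning point `exit t` is marked, so it can be added to `C` or to `F`. -/
theorem card_add_card_lt_of_lt_exit (h : Routable c T Ends S) (hF : F ⊆ Ends)
    (hCS : C ⊆ above c S) (hC : IsAntichain (· ≤ ·) (C : Set (ℤ × ℤ))) (hFr : ∀ f ∈ F, f.1 ≤ r)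
    (hCr : ∀ x ∈ C, x.1 ≤ r) (hCF : ∀ x ∈ C, ∀ f ∈ F, ¬ x ≤ f) (htr : t ≤ r)
    (hr : r < exit t) : #C + #F < #{u ∈ T | u ≤ exit t} := by
  have hCS' : C ⊆ S := hCS.trans (Finset.filter_subset _ _)
  have hFexit (f) (hf : f ∈ F) : f.1 < exit t := (hFr f hf).trans_lt hr
  have hCexit (x) (hx : x ∈ C) : x.1 < exit t := (hCr x hx).trans_lt hr
  have hCc (x) (hx : x ∈ C) : ¬ x.2 ≤ c := (mem_above.1 (hCS hx)).2.not_ge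
  rcases Finset.mem_union.1 (mem_row.1 (rowExit_mem_of_lt (htr.trans_lt hr))) with hS | hE
  · have hanti : IsAntichain (· ≤ ·) (insert (exit t, c) C : Set (ℤ × ℤ)) :=
      hC.insert (fun x hx _ hle => hCc x hx hle.2) fun x hx _ hle => (hCexit x hx).not_ge hle.1
    rw [← Finset.coe_insert] at hanti
    have hle := h.card_add_card_le F hF _ (Finset.insert_subset hS hCS') hanti (exit t)
      (fun f hf => (hFexit f hf).le)
      ((Finset.forall_mem_insert _ _ _).2 ⟨le_rfl, fun x hx => (hCexit x hx).le⟩)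
      ((Finset.forall_mem_insert _ _ _).2 ⟨fun f hf hle => (hFexit f hf).not_ge hle.1, hCF⟩)
    rw [Finset.card_insert_of_notMem fun hm => (hCexit _ hm).false] at hle
    omega
  · have hle := h.card_add_card_le _ (Finset.insert_subset hE hF) C hCS' hC (exit t)
      ((Finset.forall_mem_insert _ _ _).2 ⟨le_rfl, fun f hf => (hFexit f hf).le⟩)
      (fun x hx => (hCexit x hx).le)
      fun x hx => (Finset.forall_mem_insert _ _ _).2 ⟨fun hle => hCc x hx hle.2, hCF x hx⟩
    rw [Finset.card_insert_of_notMem fun hm => (hFexit _ hm).false] at hle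
    omega

theorem card_add_card_le_exit (h : Routable c T Ends S) (hF : F ⊆ Ends) (hCS : C ⊆ above c S)
    (hC : IsAntichain (· ≤ ·) (C : Set (ℤ × ℤ))) (hFr : ∀ f ∈ F, f.1 ≤ r)
    (hCr : ∀ x ∈ C, x.1 ≤ r) (hCF : ∀ x ∈ C, ∀ f ∈ F, ¬ x ≤ f) :
    #C + #F ≤ #{t ∈ T | exit t ≤ r} := by
  by_cases hcross : ∃ t ∈ T, t ≤ r ∧ r < exit t
  · obtain ⟨t, ht, htr, hr⟩ := hcross
    have hlt := h.card_add_card_lt_of_lt_exit hF hCS hC hFr hCr hCF htr hr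
    rw [card_filter_le_rowExit ht htr hr] at hlt
    exact Nat.le_of_lt_succ hlt
  · push Not at hcross
    have hCS' : C ⊆ S := hCS.trans (Finset.filter_subset _ _)
    refine (h.card_add_card_le F hF C hCS' hC r hFr hCr hCF).trans (Finset.card_le_card ?_)
    exact Finset.monotone_filter_right _ hcross

theorem card_filter_image_exit (h : Routable c T Ends S) (q : ℤ → Prop) [DecidablePred q] :
    #{x ∈ T.image exit \ row c Ends | q x} + #{e ∈ Ends | e.2 = c ∧ q e.1} =
      #{t ∈ T | q (exit t)} := by
  rw [← card_filter_row, ← Finset.card_union_of_disjoint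
      (Finset.disjoint_filter_filter Finset.sdiff_disjoint), ← Finset.filter_union,
    Finset.sdiff_union_of_subset h.row_subset_image_exit, Finset.filter_image,
    Finset.card_image_of_injOn ((rowExit_strictMonoOn T _).injOn.mono (Finset.filter_subset _ _))]

theorem step (h : Routable c T Ends S) :
    Routable (c + 1) (T.image exit \ row c Ends) (above c Ends) (above c S) where
  le_snd p hp := by
    rcases Finset.mem_union.1 hp with hp | hp <;> exact (mem_above.1 hp).2
  isChain := h.isChain.mono fun _ he => (mem_above.1 he).1
  mem_of_lt e he p hp hep := by
    rw [above, above, ← Finset.filter_union] at hp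
    have hpT := h.mem_of_lt e (mem_above.1 he).1 p (mem_above.1 hp).1 hep
    have hexit := (h.exit_le (mem_above.1 he).1 hep.le).antisymm (le_rowExit T _ p.1)
    refine Finset.mem_sdiff.2 ⟨Finset.mem_image.2 ⟨p.1, hpT, hexit⟩, fun hrow => ?_⟩
    rcases h.isChain.total (mem_above.1 he).1 (mem_row.1 hrow) with hle | hle
    · exact (mem_above.1 he).2.not_ge hle.2
    · exact hep.not_ge hle.1
  card_eq := by
    have hT := h.card_filter_image_exit fun _ => True
    simp only [and_true, Finset.filter_true] at hT
    have hEnds := Finset.card_filter_add_card_filter_not (s := Ends) fun e => c < e.2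
    have heq : {e ∈ Ends | ¬ c < e.2} = {e ∈ Ends | e.2 = c} :=
      Finset.filter_congr fun e he => by
        have := h.le_snd e (Finset.mem_union_right S he)
        omega
    rw [heq] at hEnds
    have := h.card_eq
    unfold above
    omega
  card_add_card_le F hF C hCS hC r hFr hCr hCF := by
    have hdisj : Disjoint F {e ∈ Ends | e.2 = c ∧ e.1 ≤ r} := Finset.disjoint_left.2 fun e he he' =>
      (mem_above.1 (hF he)).2.ne' (Finset.mem_filter.1 he').2.1
    have hle := h.card_add_card_le_exit (F := F ∪ {e ∈ Ends | e.2 = c ∧ e.1 ≤ r}) (r := r)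
      (Finset.union_subset (hF.trans (Finset.filter_subset _ _)) (Finset.filter_subset _ _))
      hCS hC
      (fun f hf => (Finset.mem_union.1 hf).elim (hFr f) fun hf => (Finset.mem_filter.1 hf).2.2)
      hCr
      (fun x hx f hf => (Finset.mem_union.1 hf).elim (hCF x hx f) fun hf hxf =>
        (mem_above.1 (hCS hx)).2.not_ge (hxf.2.trans (Finset.mem_filter.1 hf).2.1.le))
    rw [Finset.card_union_of_disjoint hdisj, ← h.card_filter_image_exit fun x => x ≤ r] at hle
    omega

end Routable

/-- Disjoint north-east paths `P t` from `(t, c)`, for `t ∈ T`, to points of `Ends`, together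
covering `S`. -/
structure IsRouting (c : ℤ) (T : Finset ℤ) (Ends S : Finset (ℤ × ℤ)) (P : ℤ → List (ℤ × ℤ)) :
    Prop where
  isNEPathFrom : ∀ t ∈ T, ∃ e ∈ Ends, IsNEPathFrom (P t) (t, c) e
  disjoint : ∀ t ∈ T, ∀ u ∈ T, t ≠ u → ∀ p ∈ P t, p ∉ P u
  exists_mem : ∀ p ∈ S, ∃ t ∈ T, p ∈ P t

theorem IsRouting.extend (h : Routable c T Ends S)
    (hP : IsRouting (c + 1) (T.image exit \ row c Ends) (above c Ends) (above c S) P) :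
    IsRouting c T Ends S fun t =>
      eastSegment t (exit t) c ++ if exit t ∈ row c Ends then [] else P (exit t) := by
  have hnext {t} (ht : t ∈ T) (hrow : exit t ∉ row c Ends) : exit t ∈ T.image exit \ row c Ends :=
    Finset.mem_sdiff.2 ⟨Finset.mem_image_of_mem _ ht, hrow⟩
  have hmem {t p} : (p ∈ eastSegment t (exit t) c ++ if exit t ∈ row c Ends then [] else P (exit t))
      ↔ (t ≤ p.1 ∧ p.1 ≤ exit t ∧ p.2 = c) ∨ exit t ∉ row c Ends ∧ p ∈ P (exit t) := by
    rw [List.mem_append, mem_eastSegment (le_rowExit T _ t)]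
    split_ifs with hrow <;> simp [hrow]
  have habove {t p} (ht : t ∈ T) (hrow : exit t ∉ row c Ends) (hp : p ∈ P (exit t)) : c < p.2 := by
    obtain ⟨e, -, hpath⟩ := hP.isNEPathFrom _ (hnext ht hrow)
    exact (hpath.start_le hp).2
  refine ⟨fun t ht => ?_, fun t ht u hu htu p hpt hpu => ?_, fun p hp => ?_⟩
  · have hseg := isNEPathFrom_eastSegment (c := c) (le_rowExit T (row c (S ∪ Ends)) t)
    split_ifs with hrow
    · exact ⟨_, mem_row.1 hrow, by simpa using hseg⟩
    · obtain ⟨e, he, hpath⟩ := hP.isNEPathFrom _ (hnext ht hrow)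
      exact ⟨e, (mem_above.1 he).1, hseg.append hpath (Or.inr rfl)⟩
  · rcases hmem.1 hpt with ⟨htp, hpt, hpc⟩ | ⟨hrow, hpt⟩ <;>
      rcases hmem.1 hpu with ⟨hup, hpu, hpc'⟩ | ⟨hrow', hpu⟩
    · rcases htu.lt_or_gt with hlt | hlt
      · exact (rowExit_lt _ hu hlt).not_ge (hup.trans hpt)
      · exact (rowExit_lt _ ht hlt).not_ge (htp.trans hpu)
    · exact (habove hu hrow' hpu).ne' hpc
    · exact (habove ht hrow hpt).ne' hpc'
    · exact hP.disjoint _ (hnext ht hrow) _ (hnext hu hrow')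
        ((rowExit_strictMonoOn T _).injOn.ne ht hu htu) p hpt hpu
  · rcases (h.le_snd p (Finset.mem_union_left _ hp)).eq_or_lt with hpc | hpc
    · obtain ⟨x, y⟩ := p
      obtain rfl : c = y := hpc
      obtain ⟨t, ht, htx, hxt⟩ := h.exists_mem_le_exit (Finset.mem_union_left _ hp)
      exact ⟨t, ht, hmem.2 (Or.inl ⟨htx, hxt, rfl⟩)⟩
    · obtain ⟨y, hy, hpy⟩ := hP.exists_mem p (mem_above.2 ⟨hp, hpc⟩)
      obtain ⟨hy, hrow⟩ := Finset.mem_sdiff.1 hy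
      obtain ⟨t, ht, rfl⟩ := Finset.mem_image.1 hy
      exact ⟨t, ht, hmem.2 (Or.inr ⟨hrow, hpy⟩)⟩

theorem Routable.exists_isRouting_of_lt (N : ℕ) (h : Routable c T Ends S)
    (hN : ∀ e ∈ Ends, e.2 < c + N) : ∃ P, IsRouting c T Ends S P := by
  induction N generalizing c T Ends S with
  | zero =>
    have hEnds : Ends = ∅ := Finset.eq_empty_of_forall_notMem fun e he => by
      have hlt := hN e he
      have hle := h.le_snd e (Finset.mem_union_right S he)
      rw [Nat.cast_zero] at hlt
      omega
    have hT : T = ∅ := by rw [← Finset.card_eq_zero, h.card_eq, hEnds, Finset.card_empty]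
    refine ⟨fun _ => [], by simp [hT], by simp, fun p hp => ?_⟩
    obtain ⟨t, ht, -⟩ := h.exists_mem_le (Finset.mem_union_left Ends hp)
    simp [hT] at ht
  | succ N ih =>
    obtain ⟨P, hP⟩ := ih h.step fun e he => by
      have := hN e (mem_above.1 he).1
      push_cast at this
      omega
    exact ⟨_, hP.extend h⟩

theorem Routable.exists_isRouting (h : Routable c T Ends S) : ∃ P, IsRouting c T Ends S P := by
  refine h.exists_isRouting_of_lt (Ends.sup fun e => (e.2 - c).toNat + 1) fun e he => ?_
  have := Finset.le_sup (f := fun e : ℤ × ℤ => (e.2 - c).toNat + 1) he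
  omega

end Routing

section Admissible

variable {n d : ℕ} {e : Fin d → ℕ × ℕ} {S S' : Finset (ℕ × ℕ)} {P Q : Fin d → List (ℤ × ℤ)}

/-- A pair of natural numbers as a point of the integer lattice. -/
def latticePoint : ℕ × ℕ ↪o ℤ × ℤ where
  toFun p := (p.1, p.2)
  inj' p q h := by simpa [Prod.ext_iff] using h
  map_rel_iff' {p q} := by
    change ((p.1 : ℤ) ≤ q.1 ∧ (p.2 : ℤ) ≤ q.2) ↔ p ≤ q
    rw [Nat.cast_le, Nat.cast_le, Prod.le_def]

theorem latticePoint_apply (s : ℕ × ℕ) : latticePoint s = ((s.1 : ℤ), (s.2 : ℤ)) :=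
  rfl

/-- The reflections that exchange one of the first `d` positions with a later one, encoded by the
pair of exchanged positions. -/
def reflections (n d : ℕ) : Finset (ℕ × ℕ) :=
  Finset.Icc 1 d ×ˢ Finset.Icc (d + 1) n

theorem mem_reflections {s : ℕ × ℕ} :
    s ∈ reflections n d ↔ 1 ≤ s.1 ∧ s.1 ≤ d ∧ d + 1 ≤ s.2 ∧ s.2 ≤ n := by
  simp [reflections, and_assoc]

/-- The paper's starting point `(d + 1 - ℓ, d)`, with `ℓ` counted from `0`. -/
def startPoint (d : ℕ) (ℓ : Fin d) : ℤ × ℤ :=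
  (d - ℓ, d)

theorem card_le_of_startPoint_le {K : Finset (Fin d)} {m : ℕ}
    (hK : ∀ ℓ ∈ K, (startPoint d ℓ).1 ≤ m) : #K ≤ m := by
  rw [← Nat.sub_zero m, ← Nat.card_Ioc]
  refine Finset.card_le_card_of_injOn (fun ℓ => d - ℓ) (fun ℓ hℓ => ?_) fun k _ l _ hkl => ?_
  · have : (d - ℓ : ℤ) ≤ m := hK ℓ hℓ
    exact Finset.mem_coe.2 (Finset.mem_Ioc.2 ⟨by dsimp only; omega, by dsimp only; omega⟩)
  · dsimp only at hkl
    omega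

/-- The properties of the sequence of endpoints used to count path families: it is increasing in
the product order and lies in `[0, d] × [d, n]`. -/
structure IsEndpointSeq (n d : ℕ) (e : Fin d → ℕ × ℕ) : Prop where
  strictMono : StrictMono e
  fst_le : ∀ q, (e q).1 ≤ d
  le_snd : ∀ q, d ≤ (e q).2
  snd_le : ∀ q, (e q).2 ≤ n

/-- The antichain form of condition (S1): to the north-west of each endpoint `e q` there is room
for the antichains of `S` beside the `q + 1` paths that end weakly below `e q`. -/
def Admissible (e : Fin d → ℕ × ℕ) (S : Finset (ℕ × ℕ)) : Prop :=
  ∀ q : Fin d, ∀ C ⊆ S, IsAntichain (· ≤ ·) (C : Set (ℕ × ℕ)) →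
    (∀ x ∈ C, x.1 ≤ (e q).1 ∧ (e q).2 < x.2) → #C + (q + 1) ≤ (e q).1

theorem Admissible.mono (hS : Admissible e S) (h : S' ⊆ S) : Admissible e S' :=
  fun q C hC => hS q C (hC.trans h)

theorem Admissible.card_add_card_le (hS : Admissible e S) {J : Finset (Fin d)}
    {C : Finset (ℕ × ℕ)} (hCS : C ⊆ S) (hC : IsAntichain (· ≤ ·) (C : Set (ℕ × ℕ))) {m : ℕ}
    (hJm : ∀ j ∈ J, (e j).1 ≤ m) (hCm : ∀ x ∈ C, x.1 ∈ Finset.Icc 1 m)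
    (hCJ : ∀ x ∈ C, ∀ j ∈ J, ¬ x ≤ e j) : #C + #J ≤ m := by
  rcases J.eq_empty_or_nonempty with rfl | hJ
  · simpa using card_le_card_of_isAntichain hC hCm
  set q := J.max' hJ
  have hq : q ∈ J := J.max'_mem hJ
  have hleft : #{x ∈ C | x.1 ≤ (e q).1} + (q + 1) ≤ (e q).1 := by
    refine hS q _ ((Finset.filter_subset _ _).trans hCS)
      (hC.subset (Finset.coe_subset.2 (Finset.filter_subset _ _))) fun x hx => ?_
    obtain ⟨hxC, hxq⟩ := Finset.mem_filter.1 hx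
    exact ⟨hxq, not_le.1 fun h => hCJ x hxC q hq ⟨hxq, h⟩⟩
  have hright : #{x ∈ C | ¬ x.1 ≤ (e q).1} ≤ #(Finset.Ioc (e q).1 m) := by
    refine card_le_card_of_isAntichain (hC.subset (Finset.coe_subset.2 (Finset.filter_subset _ _)))
      fun x hx => ?_
    obtain ⟨hxC, hxq⟩ := Finset.mem_filter.1 hx
    exact Finset.mem_Ioc.2 ⟨not_le.1 hxq, (Finset.mem_Icc.1 (hCm x hxC)).2⟩
  have hJq : #J ≤ q + 1 := by
    rw [← Fin.card_Iic]
    exact Finset.card_le_card fun j hj => Finset.mem_Iic.2 (J.le_max' j hj)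
  have hsplit := Finset.card_filter_add_card_filter_not (s := C) fun x => x.1 ≤ (e q).1
  have hqm := hJm q hq
  rw [Nat.card_Ioc] at hright
  omega

theorem card_filter_Icc_le (d : ℕ) (r : ℤ) :
    #{t ∈ Finset.Icc 1 (d : ℤ) | t ≤ r} = min d r.toNat := by
  have hIcc : {t ∈ Finset.Icc 1 (d : ℤ) | t ≤ r} = Finset.Icc 1 (min (d : ℤ) r) := by
    ext t
    simp [and_assoc]
  rw [hIcc, Int.card_Icc]
  omega

theorem Admissible.routable (hS : Admissible e S) (he : IsEndpointSeq n d e)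
    (hSn : S ⊆ reflections n d) :
    Routable d (Finset.Icc 1 (d : ℤ)) (Finset.univ.image (latticePoint ∘ e))
      (S.map latticePoint.toEmbedding) where
  le_snd p hp := by
    rcases Finset.mem_union.1 hp with hp | hp
    · obtain ⟨s, hs, rfl⟩ := Finset.mem_map.1 hp
      exact Nat.cast_le.2 (by have := mem_reflections.1 (hSn hs); omega)
    · obtain ⟨q, -, rfl⟩ := Finset.mem_image.1 hp
      exact Nat.cast_le.2 (he.le_snd q)
  isChain := by
    rw [Finset.coe_image, Finset.coe_univ, Set.image_univ]
    exact (latticePoint.monotone.comp he.strictMono.monotone).isChain_range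
  mem_of_lt x hx p hp hxp := by
    obtain ⟨q, -, rfl⟩ := Finset.mem_image.1 hx
    refine Finset.mem_Icc.2 ⟨(Nat.cast_nonneg _).trans_lt hxp, ?_⟩
    rcases Finset.mem_union.1 hp with hp | hp
    · obtain ⟨s, hs, rfl⟩ := Finset.mem_map.1 hp
      exact Nat.cast_le.2 (mem_reflections.1 (hSn hs)).2.1
    · obtain ⟨q', -, rfl⟩ := Finset.mem_image.1 hp
      exact Nat.cast_le.2 (he.fst_le q')
  card_eq := by
    rw [Finset.card_image_of_injective _ (latticePoint.injective.comp he.strictMono.injective),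
      Int.card_Icc, Finset.card_fin]
    omega
  card_add_card_le F hF C hC hanti r hFr hCr hCF := by
    obtain ⟨J, -, rfl⟩ := Finset.subset_image_iff.1 hF
    obtain ⟨C, hCS, rfl⟩ := Finset.subset_map_iff.1 hC
    rw [Finset.coe_map] at hanti
    rw [card_filter_Icc_le, Finset.card_map, Finset.card_image_of_injective _
      (latticePoint.injective.comp he.strictMono.injective)]
    refine hS.card_add_card_le hCS (IsAntichain.image_embedding_iff.1 hanti) (fun j hj => ?_)
      (fun x hx => ?_)
      (fun x hx j hj hle => hCF _ (Finset.mem_map_of_mem _ hx) _ (Finset.mem_image_of_mem _ hj)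
        (latticePoint.le_iff_le.2 hle))
    · have hjr : ((e j).1 : ℤ) ≤ r := hFr _ (Finset.mem_image_of_mem _ hj)
      have := he.fst_le j
      omega
    · have hxr : (x.1 : ℤ) ≤ r := hCr _ (Finset.mem_map_of_mem _ hx)
      have := mem_reflections.1 (hSn (hCS hx))
      exact Finset.mem_Icc.2 (by omega)

theorem Admissible.exists_isPathFamily (hS : Admissible e S) (he : IsEndpointSeq n d e)
    (hSn : S ⊆ reflections n d) :
    ∃ P, IsPathFamily (startPoint d) (latticePoint ∘ e) P ∧
      S.map latticePoint.toEmbedding ⊆ vertices P := by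
  obtain ⟨P, hP⟩ := (hS.routable he hSn).exists_isRouting
  have hmem (ℓ : Fin d) : (d - ℓ : ℤ) ∈ Finset.Icc 1 (d : ℤ) := Finset.mem_Icc.2 (by omega)
  refine ⟨fun ℓ => P (d - ℓ), isPathFamily_of_forall_exists (fun ℓ => ?_) fun k l hkl => ?_,
    fun p hp => ?_⟩
  · obtain ⟨_, hq, hpath⟩ := hP.isNEPathFrom _ (hmem ℓ)
    obtain ⟨q, -, rfl⟩ := Finset.mem_image.1 hq
    exact ⟨q, hpath⟩
  · exact hP.disjoint _ (hmem k) _ (hmem l) (by omega)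
  · obtain ⟨t, ht, hpt⟩ := hP.exists_mem p hp
    rw [Finset.mem_Icc] at ht
    refine mem_vertices.2 ⟨⟨(d - t).toNat, by omega⟩, ?_⟩
    rwa [show (d : ℤ) - (d - t).toNat = t by omega]

/-- The reflections whose lattice points lie on a path of the family `P`. -/
def reflectionsOn (n d : ℕ) (P : Fin d → List (ℤ × ℤ)) : Finset (ℕ × ℕ) :=
  {s ∈ reflections n d | latticePoint s ∈ vertices P}

theorem reflectionsOn_subset (n : ℕ) (P : Fin d → List (ℤ × ℤ)) :
    reflectionsOn n d P ⊆ reflections n d :=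
  Finset.filter_subset _ _

namespace IsPathFamily

/-- The paths through the points of `C` are distinct from the `q + 1` paths that end weakly below
`e q`, and all of them start weakly to the left of `e q`. -/
theorem admissible_reflectionsOn (he : IsEndpointSeq n d e)
    (hP : IsPathFamily (startPoint d) (latticePoint ∘ e) P) :
    Admissible e (reflectionsOn n d P) := by
  intro q C hCS hC hCq
  have : Nonempty (Fin d) := ⟨q⟩
  have ⟨σ, hpath, _⟩ := hP
  have hanti : IsAntichain (· ≤ ·) (C.map latticePoint.toEmbedding : Set (ℤ × ℤ)) := by
    rw [Finset.coe_map]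
    exact IsAntichain.image_embedding_iff.2 hC
  obtain ⟨f, hf, hfP⟩ := hP.exists_injOn_mem hanti fun x hx => by
    obtain ⟨s, hs, rfl⟩ := Finset.mem_map.1 hx
    exact (Finset.mem_filter.1 (hCS hs)).2
  set I := (C.map latticePoint.toEmbedding).image f
  set J := (Finset.Iic q).map σ.symm.toEmbedding
  have hI : #I = #C := by rw [Finset.card_image_of_injOn hf, Finset.card_map]
  have hJ : #J = q + 1 := by rw [Finset.card_map, Fin.card_Iic]
  have hIP (ℓ) (hℓ : ℓ ∈ I) : ∃ s ∈ C, latticePoint s ∈ P ℓ := by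
    simp only [I, Finset.mem_image, Finset.mem_map] at hℓ
    obtain ⟨_, ⟨s, hs, rfl⟩, rfl⟩ := hℓ
    exact ⟨s, hs, hfP _ (Finset.mem_map_of_mem _ hs)⟩
  have hJP (ℓ) (hℓ : ℓ ∈ J) : ∀ p ∈ P ℓ, p ≤ latticePoint (e q) := by
    have hℓq : σ ℓ ≤ q := by simpa [J, Finset.mem_map_equiv] using hℓ
    exact fun p hp => ((hpath ℓ).le_end hp).trans
      (latticePoint.monotone (he.strictMono.monotone hℓq))
  have hdisj : Disjoint I J := by
    refine Finset.disjoint_left.2 fun ℓ hℓI hℓJ => ?_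
    obtain ⟨s, hs, hsP⟩ := hIP ℓ hℓI
    exact (hCq s hs).2.not_ge (latticePoint.le_iff_le.1 (hJP ℓ hℓJ _ hsP)).2
  rw [← hI, ← hJ, ← Finset.card_union_of_disjoint hdisj]
  refine card_le_of_startPoint_le fun ℓ hℓ => ?_
  rcases Finset.mem_union.1 hℓ with hℓ | hℓ
  · obtain ⟨s, hs, hsP⟩ := hIP ℓ hℓ
    exact ((hpath ℓ).start_le hsP).1.trans (Nat.cast_le.2 (hCq s hs).1)
  · exact (hJP ℓ hℓ _ (hpath ℓ).start_mem).1

theorem vertices_eq (he : IsEndpointSeq n d e)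
    (hP : IsPathFamily (startPoint d) (latticePoint ∘ e) P) :
    vertices P = Finset.univ.image (startPoint d) ∪
      (reflectionsOn n d P).map latticePoint.toEmbedding := by
  obtain ⟨σ, hpath, -⟩ := hP
  ext ⟨x, y⟩
  simp only [Finset.mem_union, Finset.mem_image, Finset.mem_univ, true_and, Finset.mem_map]
  constructor
  · intro hxy
    obtain ⟨ℓ, hℓ⟩ := mem_vertices.1 hxy
    have hstart := (hpath ℓ).start_le hℓ
    have hend := (hpath ℓ).le_end hℓ
    simp only [startPoint, latticePoint_apply, Function.comp_apply, Prod.mk_le_mk] at hstart hend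
    have hfst := he.fst_le (σ ℓ)
    have hsnd := he.snd_le (σ ℓ)
    rcases hstart.2.eq_or_lt with rfl | hy
    · exact Or.inl ⟨⟨(d - x).toNat, by omega⟩, Prod.ext (by simp [startPoint]; omega) rfl⟩
    · lift x to ℕ using by omega
      lift y to ℕ using by omega
      refine Or.inr ⟨(x, y), Finset.mem_filter.2 ⟨mem_reflections.2 ?_, hxy⟩, rfl⟩
      dsimp only
      omega
  · rintro (⟨ℓ, hℓ⟩ | ⟨s, hs, hsxy⟩)
    · exact mem_vertices.2 ⟨ℓ, hℓ ▸ (hpath ℓ).start_mem⟩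
    · exact hsxy ▸ (Finset.mem_filter.1 hs).2

theorem eq_of_reflectionsOn_subset (he : IsEndpointSeq n d e)
    (hP : IsPathFamily (startPoint d) (latticePoint ∘ e) P)
    (hQ : IsPathFamily (startPoint d) (latticePoint ∘ e) Q)
    (hPQ : reflectionsOn n d P ⊆ reflectionsOn n d Q) : P = Q := by
  refine hP.eq_of_vertices_subset hQ ?_
  rw [hP.vertices_eq he, hQ.vertices_eq he]
  exact Finset.union_subset_union_right (Finset.map_subset_map.2 hPQ)

end IsPathFamily

theorem ncard_maximal_admissible (he : IsEndpointSeq n d e) :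
    Set.ncard {S | Maximal (fun S => S ⊆ reflections n d ∧ Admissible e S) S} =
      Set.ncard {P | IsPathFamily (startPoint d) (latticePoint ∘ e) P} := by
  rw [setOf_maximal_eq_image (f := reflectionsOn n d)
    (s := {P | IsPathFamily (startPoint d) (latticePoint ∘ e) P})
    (fun P hP => ⟨reflectionsOn_subset n P, hP.admissible_reflectionsOn he⟩)
    (fun S hS => ?_) (fun P hP Q hQ hPQ => hP.eq_of_reflectionsOn_subset he hQ hPQ)]
  · exact Set.InjOn.ncard_image fun P hP Q hQ hPQ =>
      hP.eq_of_reflectionsOn_subset he hQ hPQ.subset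
  · obtain ⟨P, hP, hSP⟩ := hS.2.exists_isPathFamily he hS.1
    exact ⟨P, hP, fun s hs => Finset.mem_filter.2 ⟨hS.1 hs, hSP (Finset.mem_map_of_mem _ hs)⟩⟩

end Admissible

section Swaps

variable {n d x : ℕ} {L : List (ℕ × ℕ)} {C : Finset (ℕ × ℕ)} {s : ℕ × ℕ}

theorem applySwaps_cons (s : ℕ × ℕ) (L : List (ℕ × ℕ)) (x : ℕ) :
    applySwaps (s :: L) x = Equiv.swap s.1 s.2 (applySwaps L x) :=
  (Equiv.swap_apply_def _ _ _).symm

theorem applySwaps_injective (L : List (ℕ × ℕ)) : Function.Injective (applySwaps L) := by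
  induction L with
  | nil => exact Function.injective_id
  | cons s L ih =>
    rw [funext (applySwaps_cons s L)]
    exact (Equiv.injective _).comp ih

theorem mapsTo_applySwaps {T : Set ℕ} (h : ∀ s ∈ L, s.1 ∈ T ∧ s.2 ∈ T) :
    Set.MapsTo (applySwaps L) T T := by
  induction L with
  | nil => exact Set.mapsTo_id T
  | cons s L ih =>
    obtain ⟨⟨h₁, h₂⟩, hL⟩ := List.forall_mem_cons.1 h
    intro x hx
    rw [applySwaps_cons, Equiv.swap_apply_def]
    split_ifs
    exacts [h₂, h₁, ih hL hx]

theorem applySwaps_of_forall_ne (h : ∀ s ∈ L, x ≠ s.1 ∧ x ≠ s.2) : applySwaps L x = x := by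
  induction L with
  | nil => rfl
  | cons s L ih =>
    obtain ⟨⟨h₁, h₂⟩, hL⟩ := List.forall_mem_cons.1 h
    rw [applySwaps_cons, ih hL, Equiv.swap_apply_of_ne_of_ne h₁ h₂]

/-- A list of reflections, each strictly nested in the preceding ones. These are the chains of
pairwise commuting reflections occurring in (S1). -/
def IsNested (L : List (ℕ × ℕ)) : Prop :=
  L.Pairwise fun a b => a.1 < b.1 ∧ b.2 < a.2

theorem IsNested.isAntichain (hL : IsNested L) :
    IsAntichain (· ≤ ·) (L.toFinset : Set (ℕ × ℕ)) := by
  have : Std.Symm fun a b : ℕ × ℕ => ¬ a ≤ b ∧ ¬ b ≤ a := ⟨fun _ _ h => h.symm⟩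
  have hpair : L.Pairwise fun a b => ¬ a ≤ b ∧ ¬ b ≤ a :=
    hL.imp fun h => ⟨fun hab => h.2.not_ge hab.2, fun hba => h.1.not_ge hba.1⟩
  intro a ha b hb hab
  exact (hpair.forall (List.mem_toFinset.1 ha) (List.mem_toFinset.1 hb) hab).1

theorem exists_isNested_of_isAntichain (hC : IsAntichain (· ≤ ·) (C : Set (ℕ × ℕ))) :
    ∃ L, IsNested L ∧ L.toFinset = C := by
  induction C using Finset.induction_on_max_value (Prod.fst : ℕ × ℕ → ℕ) with
  | empty => exact ⟨[], List.Pairwise.nil, rfl⟩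
  | insert a C ha hmax ih =>
    rw [Finset.coe_insert] at hC
    obtain ⟨L, hL, rfl⟩ := ih (hC.subset (Set.subset_insert _ _))
    refine ⟨L ++ [a], List.pairwise_append.2 ⟨hL, List.pairwise_singleton _ _, ?_⟩, ?_⟩
    · intro b hb c hc
      obtain rfl := List.mem_singleton.1 hc
      have hbL := List.mem_toFinset.2 hb
      have hle := hmax b hbL
      have hne : b ≠ c := fun h => ha (h ▸ hbL)
      have hsnd : c.2 < b.2 := not_le.1 fun h =>
        hC (Set.mem_insert_of_mem _ hbL) (Set.mem_insert _ _) hne ⟨hle, h⟩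
      refine ⟨hle.lt_of_ne fun h => ?_, hsnd⟩
      exact hC (Set.mem_insert _ _) (Set.mem_insert_of_mem _ hbL) hne.symm ⟨h.ge, hsnd.le⟩
    · ext b
      simp

theorem IsNested.applySwaps_fst (hL : IsNested L) (hLd : ∀ s ∈ L, s.1 ≤ d ∧ d < s.2)
    (hs : s ∈ L) : applySwaps L s.1 = s.2 := by
  induction L with
  | nil => simp at hs
  | cons t L ih =>
    obtain ⟨ht, hL⟩ := List.pairwise_cons.1 hL
    obtain ⟨htd, hLd'⟩ := List.forall_mem_cons.1 hLd
    rw [applySwaps_cons]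
    obtain rfl | hs := List.mem_cons.1 hs
    · rw [applySwaps_of_forall_ne, Equiv.swap_apply_left]
      exact fun u hu => ⟨(ht u hu).1.ne, (htd.1.trans_lt (hLd' u hu).2).ne⟩
    · rw [ih hL hLd' hs, Equiv.swap_apply_of_ne_of_ne]
      · exact (htd.1.trans_lt (hLd' s hs).2).ne'
      · exact (ht s hs).2.ne

theorem IsNested.sum_applySwaps_add_sum {M : Type*} [AddCommMonoid M] (hL : IsNested L)
    (hLd : ∀ s ∈ L, s ∈ reflections n d) (g : ℕ → M) :
    ∑ x ∈ Finset.Icc 1 d, g (applySwaps L x) + ∑ s ∈ L.toFinset, g s.1 =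
      ∑ x ∈ Finset.Icc 1 d, g x + ∑ s ∈ L.toFinset, g s.2 := by
  have hLd' (s) (hs : s ∈ L) := mem_reflections.1 (hLd s hs)
  have hinj : Set.InjOn Prod.fst (L.toFinset : Set (ℕ × ℕ)) :=
    injOn_fst_of_isAntichain hL.isAntichain
  have hsub : L.toFinset.image Prod.fst ⊆ Finset.Icc 1 d := by
    intro x hx
    obtain ⟨s, hs, rfl⟩ := Finset.mem_image.1 hx
    have := hLd' s (List.mem_toFinset.1 hs)
    exact Finset.mem_Icc.2 (by omega)
  have hfix : ∀ x ∈ Finset.Icc 1 d \ L.toFinset.image Prod.fst, g (applySwaps L x) = g x := by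
    intro x hx
    obtain ⟨hxd, hxL⟩ := Finset.mem_sdiff.1 hx
    rw [applySwaps_of_forall_ne]
    refine fun s hs => ⟨fun h => hxL (Finset.mem_image.2 ⟨s, List.mem_toFinset.2 hs, h.symm⟩), ?_⟩
    have := hLd' s hs
    have := Finset.mem_Icc.1 hxd
    omega
  have hmove : ∀ s ∈ L.toFinset, g (applySwaps L s.1) = g s.2 := fun s hs => by
    rw [hL.applySwaps_fst (fun s hs => ⟨(hLd' s hs).2.1, (hLd' s hs).2.2.1⟩)
      (List.mem_toFinset.1 hs)]
  rw [← Finset.sum_sdiff hsub, ← Finset.sum_sdiff (f := g) hsub, Finset.sum_image hinj,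
    Finset.sum_image hinj, Finset.sum_congr rfl hfix, Finset.sum_congr rfl hmove]
  exact add_right_comm _ _ _

end Swaps

section Endpoints

variable {n d m : ℕ} {f τ i : ℕ → ℕ}

theorem orderEmbOfFin_le_iff {α : Type*} [LinearOrder α] {s : Finset α} {k : ℕ} (h : #s = k)
    (j : Fin k) (m : α) : s.orderEmbOfFin h j ≤ m ↔ j + 1 ≤ #{y ∈ s | y ≤ m} := by
  have hcard : #{y ∈ s | y ≤ m} = #{l : Fin k | s.orderEmbOfFin h l ≤ m} := by
    conv_lhs => rw [← Finset.map_orderEmbOfFin_univ s h, Finset.filter_map, Finset.card_map]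
    rfl
  rw [hcard]
  constructor
  · intro hj
    rw [← Fin.card_Iic]
    refine Finset.card_le_card fun l hl => Finset.mem_filter.2 ⟨Finset.mem_univ l, ?_⟩
    exact ((s.orderEmbOfFin h).monotone (Finset.mem_Iic.1 hl)).trans hj
  · contrapose!
    intro hj
    rw [Nat.lt_succ_iff, ← Fin.card_Iio]
    refine Finset.card_le_card fun l hl => Finset.mem_Iio.2 ?_
    exact (s.orderEmbOfFin h).lt_iff_lt.1 ((Finset.mem_filter.1 hl).2.trans_lt hj)

theorem dominatedByW_iff (hf : Set.InjOn f (Finset.Icc 1 d)) :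
    DominatedByW d f i ↔ ∀ q : Fin d, q + 1 ≤ #{x ∈ Finset.Icc 1 d | f x ≤ i (q + 1)} := by
  have hcard : #((Finset.Icc 1 d).image f) = d := by
    rw [Finset.card_image_of_injOn hf, Nat.card_Icc, Nat.add_sub_cancel]
  refine (Fin.forall_iff (p := fun q => (sortedFirstVals d f).getD q 0 ≤ i (q + 1))).symm.trans
    (forall_congr' fun q => ?_)
  have hlen : q < (sortedFirstVals d f).length := by
    rw [sortedFirstVals, Finset.length_sort, hcard]
    exact q.2
  rw [List.getD_eq_getElem _ _ hlen]
  have := orderEmbOfFin_le_iff hcard q (i (q + 1))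
  rwa [Finset.orderEmbOfFin_apply, Finset.filter_image,
    Finset.card_image_of_injOn (hf.mono (Finset.filter_subset _ _))] at this

theorem apply_le_iff_le_add_card {α : Type*} [LinearOrder α] {τ : ℕ → α} {a b y : ℕ} {m : α}
    (hτ : MonotoneOn τ (Set.Icc (a + 1) b)) (hy : y ∈ Set.Icc (a + 1) b) :
    τ y ≤ m ↔ y ≤ a + #{z ∈ Finset.Icc (a + 1) b | τ z ≤ m} := by
  constructor
  · intro hym
    have hsub : Finset.Icc (a + 1) y ⊆ {z ∈ Finset.Icc (a + 1) b | τ z ≤ m} := fun z hz => by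
      obtain ⟨haz, hzy⟩ := Finset.mem_Icc.1 hz
      have hzb : z ∈ Set.Icc (a + 1) b := ⟨haz, hzy.trans hy.2⟩
      exact Finset.mem_filter.2 ⟨Finset.mem_Icc.2 hzb, (hτ hzb hy hzy).trans hym⟩
    have hcard := Finset.card_le_card hsub
    rw [Nat.card_Icc] at hcard
    omega
  · contrapose!
    intro hym
    have hsub : {z ∈ Finset.Icc (a + 1) b | τ z ≤ m} ⊆ Finset.Ico (a + 1) y := fun z hz => by
      obtain ⟨hz, hzm⟩ := Finset.mem_filter.1 hz
      rw [Finset.mem_Icc] at hz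
      refine Finset.mem_Ico.2 ⟨hz.1, ?_⟩
      by_contra! hyz
      exact (hym.trans_le (hτ hy hz hyz)).not_ge hzm
    have hcard := Finset.card_le_card hsub
    rw [Nat.card_Ico] at hcard
    have := hy.1
    omega

/-- The endpoint attached to the value `m`. If `s` exchanges the positions `s.1 ≤ d < s.2`, then
`τ s.1 ≤ m` or `τ s.2 ≤ m` if and only if `s` lies weakly to the left of, or weakly below, this
point. -/
def endpoint (n d : ℕ) (τ : ℕ → ℕ) (m : ℕ) : ℕ × ℕ :=
  (#{x ∈ Finset.Icc 1 d | τ x ≤ m}, d + #{x ∈ Finset.Icc (d + 1) n | τ x ≤ m})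

theorem endpoint_monotone (n d : ℕ) (τ : ℕ → ℕ) : Monotone (endpoint n d τ) := by
  intro m m' hm
  have hcard (T : Finset ℕ) : #{x ∈ T | τ x ≤ m} ≤ #{x ∈ T | τ x ≤ m'} :=
    Finset.card_le_card (Finset.monotone_filter_right T fun x _ hx => le_trans hx hm)
  exact ⟨hcard (Finset.Icc 1 d), Nat.add_le_add_left (hcard (Finset.Icc (d + 1) n)) d⟩

theorem endpoint_fst_add_snd (hdn : d ≤ n) (hτ : Set.BijOn τ (Set.Icc 1 n) (Set.Icc 1 n))
    (hm : m ≤ n) : (endpoint n d τ m).1 + (endpoint n d τ m).2 = d + m := by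
  have hunion : Finset.Icc 1 n = Finset.Icc 1 d ∪ Finset.Icc (d + 1) n := by
    ext x
    simp only [Finset.mem_union, Finset.mem_Icc]
    omega
  have hdisj : Disjoint (Finset.Icc 1 d) (Finset.Icc (d + 1) n) :=
    Finset.disjoint_left.2 fun x hx hx' => by
      rw [Finset.mem_Icc] at hx hx'
      omega
  have hcard : #{x ∈ Finset.Icc 1 n | τ x ≤ m} = m := by
    conv_rhs => rw [← Nat.add_sub_cancel (n := m) (m := 1), ← Nat.card_Icc]
    refine Finset.card_nbij τ (fun x hx => ?_) (hτ.injOn.mono fun x hx => ?_) fun y hy => ?_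
    · obtain ⟨hx, hxm⟩ := Finset.mem_filter.1 hx
      exact Finset.mem_Icc.2 ⟨(hτ.mapsTo (Finset.mem_Icc.1 hx)).1, hxm⟩
    · exact Finset.mem_Icc.1 (Finset.mem_filter.1 hx).1
    · obtain ⟨hy1, hym⟩ := Finset.mem_Icc.1 hy
      obtain ⟨x, hx, rfl⟩ := hτ.surjOn ⟨hy1, hym.trans hm⟩
      exact ⟨x, Finset.mem_filter.2 ⟨Finset.mem_Icc.2 hx, hym⟩, rfl⟩
  rw [hunion, Finset.filter_union,
    Finset.card_union_of_disjoint (Finset.disjoint_filter_filter hdisj)] at hcard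
  unfold endpoint
  dsimp only
  omega

theorem isEndpointSeq_endpoint (hdn : d ≤ n) (hτ : Set.BijOn τ (Set.Icc 1 n) (Set.Icc 1 n))
    (hi : StrictMonoOn i (Set.Icc 1 d)) (hin : ∀ ℓ ∈ Set.Icc 1 d, i ℓ ≤ n) :
    IsEndpointSeq n d fun q => endpoint n d τ (i (q + 1)) where
  strictMono q q' hq := by
    have hmem (q : Fin d) : (q : ℕ) + 1 ∈ Set.Icc 1 d := ⟨by omega, by omega⟩
    have hlt := hi (hmem q) (hmem q') (Nat.succ_lt_succ hq)
    refine (endpoint_monotone n d τ hlt.le).lt_of_ne fun heq => hlt.ne ?_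
    have hsum := endpoint_fst_add_snd hdn hτ (hin _ (hmem q))
    have hsum' := endpoint_fst_add_snd hdn hτ (hin _ (hmem q'))
    rw [heq] at hsum
    omega
  fst_le q := by
    simpa [endpoint] using Finset.card_filter_le (Finset.Icc 1 d) fun x => τ x ≤ i (q + 1)
  le_snd q := Nat.le_add_right _ _
  snd_le q := by
    have := Finset.card_filter_le (Finset.Icc (d + 1) n) fun x => τ x ≤ i (q + 1)
    rw [Nat.card_Icc] at this
    unfold endpoint
    dsimp only
    omega

end Endpoints

section S1

variable {n d : ℕ} {τ i : ℕ → ℕ} {L : List (ℕ × ℕ)} {S : Finset (ℕ × ℕ)}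

theorem IsNested.dominatedByW_iff (hdn : d ≤ n) (hL : IsNested L)
    (hLd : ∀ s ∈ L, s ∈ reflections n d) (hτ : Set.InjOn τ (Set.Icc 1 n))
    (hmono1 : MonotoneOn τ (Set.Icc 1 d)) (hmono2 : MonotoneOn τ (Set.Icc (d + 1) n)) :
    DominatedByW d (fun x => τ (applySwaps L x)) i ↔ ∀ q : Fin d,
      q + 1 + #{s ∈ L.toFinset | s.1 ≤ (endpoint n d τ (i (q + 1))).1} ≤
        (endpoint n d τ (i (q + 1))).1 +
          #{s ∈ L.toFinset | s.2 ≤ (endpoint n d τ (i (q + 1))).2} := by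
  have hLd' (s) (hs : s ∈ L.toFinset) := mem_reflections.1 (hLd s (List.mem_toFinset.1 hs))
  have hmaps : Set.MapsTo (applySwaps L) (Finset.Icc 1 d) (Set.Icc 1 n) := by
    refine (mapsTo_applySwaps fun s hs => ?_).mono_left fun x hx => ?_
    · have := hLd' s (List.mem_toFinset.2 hs)
      exact ⟨⟨by omega, by omega⟩, by omega, by omega⟩
    · have := Finset.mem_Icc.1 hx
      exact ⟨this.1, this.2.trans hdn⟩
  rw [_root_.dominatedByW_iff (f := fun x => τ (applySwaps L x))
    (hτ.comp (applySwaps_injective L).injOn hmaps)]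
  refine forall_congr' fun q => ?_
  set m := i (q + 1)
  have hcount := hL.sum_applySwaps_add_sum hLd fun x => if τ x ≤ m then 1 else 0
  simp only [← Finset.card_filter] at hcount
  have hfst : {s ∈ L.toFinset | τ s.1 ≤ m} = {s ∈ L.toFinset | s.1 ≤ (endpoint n d τ m).1} := by
    refine Finset.filter_congr fun s hs => ?_
    have := apply_le_iff_le_add_card (a := 0) (m := m) hmono1 ⟨(hLd' s hs).1, (hLd' s hs).2.1⟩
    rwa [Nat.zero_add] at this
  have hsnd : {s ∈ L.toFinset | τ s.2 ≤ m} = {s ∈ L.toFinset | s.2 ≤ (endpoint n d τ m).2} :=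
    Finset.filter_congr fun s hs => apply_le_iff_le_add_card hmono2 (hLd' s hs).2.2
  rw [← hfst, ← hsnd]
  change _ ↔ _ ≤ #{x ∈ Finset.Icc 1 d | τ x ≤ m} + _
  rw [← hcount, Nat.add_le_add_iff_right]

theorem s1Prop_iff_admissible (hdn : d ≤ n) (hS : S ⊆ reflections n d)
    (hτ : Set.InjOn τ (Set.Icc 1 n)) (hmono1 : MonotoneOn τ (Set.Icc 1 d))
    (hmono2 : MonotoneOn τ (Set.Icc (d + 1) n)) :
    S1Prop d τ i S.val ↔ Admissible (fun q : Fin d => endpoint n d τ (i (q + 1))) S := by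
  constructor
  · intro h q C hCS hC hCq
    obtain ⟨L, hL, rfl⟩ := exists_isNested_of_isAntichain hC
    have hLS (s) (hs : s ∈ L) : s ∈ S := hCS (List.mem_toFinset.2 hs)
    have hle := (hL.dominatedByW_iff hdn (fun s hs => hS (hLS s hs)) hτ hmono1 hmono2).1
      (h L hLS hL) q
    rw [Finset.filter_true_of_mem fun s hs => (hCq s hs).1,
      Finset.filter_false_of_mem fun s hs => (hCq s hs).2.not_ge, Finset.card_empty] at hle
    dsimp only
    omega
  · intro h L hLS (hL : IsNested L)
    refine (hL.dominatedByW_iff hdn (fun s hs => hS (hLS s hs)) hτ hmono1 hmono2).2 fun q => ?_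
    set e := endpoint n d τ (i (q + 1))
    have hsub : {s ∈ L.toFinset | s.1 ≤ e.1 ∧ e.2 < s.2} ⊆ L.toFinset := Finset.filter_subset _ _
    have hle : #{s ∈ L.toFinset | s.1 ≤ e.1 ∧ e.2 < s.2} + (q + 1) ≤ e.1 := h q _
      (hsub.trans fun s hs => hLS s (List.mem_toFinset.1 hs))
      (hL.isAntichain.subset hsub) fun s hs => (Finset.mem_filter.1 hs).2
    have hcover : {s ∈ L.toFinset | s.1 ≤ e.1} ⊆
        {s ∈ L.toFinset | s.1 ≤ e.1 ∧ e.2 < s.2} ∪ {s ∈ L.toFinset | s.2 ≤ e.2} := fun s hs => by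
      simp only [Finset.mem_union, Finset.mem_filter] at hs ⊢
      rcases le_or_gt s.2 e.2 with hs2 | hs2
      · exact Or.inr ⟨hs.1, hs2⟩
      · exact Or.inl ⟨hs.1, hs.2, hs2⟩
    have := (Finset.card_le_card hcover).trans (Finset.card_union_le _ _)
    omega

end S1

section Main

variable {n d : ℕ} {τ i : ℕ → ℕ}

theorem maximal_s1Prop_iff (hdn : d ≤ n) (hτ : Set.InjOn τ (Set.Icc 1 n))
    (hmono1 : MonotoneOn τ (Set.Icc 1 d)) (hmono2 : MonotoneOn τ (Set.Icc (d + 1) n))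
    (S : Finset (ℕ × ℕ)) :
    ((∀ s ∈ S, 1 ≤ s.1 ∧ s.1 ≤ d ∧ d + 1 ≤ s.2 ∧ s.2 ≤ n) ∧ S1Prop d τ i S.val ∧
        ∀ s : ℕ × ℕ, s ∉ S → (1 ≤ s.1 ∧ s.1 ≤ d ∧ d + 1 ≤ s.2 ∧ s.2 ≤ n) →
          ¬ S1Prop d τ i (insert s S).val) ↔
      Maximal (fun S => S ⊆ reflections n d ∧
        Admissible (fun q : Fin d => endpoint n d τ (i (q + 1))) S) S := by
  simp only [← mem_reflections]
  rw [Finset.maximal_iff_forall_insert fun s t ht hst => ⟨hst.trans ht.1, ht.2.mono hst⟩, and_assoc]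
  refine and_congr_right fun (hS : S ⊆ reflections n d) => and_congr
    (s1Prop_iff_admissible hdn hS hτ hmono1 hmono2) (forall₂_congr fun s _ => ?_)
  rw [Finset.insert_subset_iff, and_iff_left hS, not_and]
  refine forall_congr' fun hs => not_congr ?_
  exact s1Prop_iff_admissible hdn (Finset.insert_subset hs hS) hτ hmono1 hmono2

theorem latticePoint_endpoint (hdn : d ≤ n) (hτ : Set.BijOn τ (Set.Icc 1 n) (Set.Icc 1 n)) {m : ℕ}
    (hm : m ≤ n) : latticePoint (endpoint n d τ m) =
      ((d : ℤ) - #{x ∈ Finset.Icc 1 d | m < τ x}, (#{x ∈ Finset.Icc 1 d | m < τ x} : ℤ) + m) := by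
  have hsum := endpoint_fst_add_snd hdn hτ hm
  have hfst : (endpoint n d τ m).1 + #{x ∈ Finset.Icc 1 d | m < τ x} = d := by
    simpa [endpoint] using
      Finset.card_filter_add_card_filter_not (s := Finset.Icc 1 d) fun x => τ x ≤ m
  rw [latticePoint_apply]
  exact Prod.ext (by dsimp only; omega) (by dsimp only; omega)

theorem number_maximal_S1_eq_number_path_families_general (hdn : d ≤ n)
    (hbij : Set.BijOn τ (Set.Icc 1 n) (Set.Icc 1 n))
    (hmono1 : MonotoneOn τ (Set.Icc 1 d)) (hmono2 : MonotoneOn τ (Set.Icc (d + 1) n))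
    (hi : StrictMonoOn i (Set.Icc 1 d)) (hiN : ∀ ℓ ∈ Set.Icc 1 d, i ℓ ≤ n)
    (κ : ℕ → ℕ) (hκ : ∀ q, κ q = ((Finset.Icc 1 d).filter (fun ℓ => i q < τ ℓ)).card)
    (A E : ℕ → ℤ × ℤ) (hA : ∀ ℓ, A ℓ = ((d : ℤ) + 1 - ℓ, (d : ℤ)))
    (hE : ∀ q, E q = ((d : ℤ) - κ q, (κ q : ℤ) + i q)) :
    Set.ncard {S : Finset (ℕ × ℕ) |
        (∀ s ∈ S, 1 ≤ s.1 ∧ s.1 ≤ d ∧ d + 1 ≤ s.2 ∧ s.2 ≤ n) ∧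
        S1Prop d τ i S.val ∧
        ∀ s : ℕ × ℕ, s ∉ S → (1 ≤ s.1 ∧ s.1 ≤ d ∧ d + 1 ≤ s.2 ∧ s.2 ≤ n) →
          ¬ S1Prop d τ i (insert s S).val}
    = Set.ncard {P : Fin d → List (ℤ × ℤ) |
        ∃ σ : Equiv.Perm (Fin d),
          (∀ ℓ : Fin d, IsNEPathFrom (P ℓ) (A ((ℓ : ℕ) + 1)) (E ((σ ℓ : ℕ) + 1))) ∧
          ∀ k l : Fin d, k ≠ l → ∀ p ∈ P k, p ∉ P l} := by
  have hstart : (fun ℓ : Fin d => A (ℓ + 1)) = startPoint d := funext fun ℓ => by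
    simp [hA, startPoint]
  have hend : (fun q : Fin d => E (q + 1)) =
      latticePoint ∘ fun q : Fin d => endpoint n d τ (i (q + 1)) := funext fun q => by
    rw [hE, hκ, Function.comp_apply, latticePoint_endpoint hdn hbij (hiN _ ⟨by omega, by omega⟩)]
  simp only [maximal_s1Prop_iff hdn hbij.injOn hmono1 hmono2]
  rw [ncard_maximal_admissible (isEndpointSeq_endpoint hdn hbij hi hiN), ← hstart, ← hend]
  rfl

end Main

/-- The number of maximal (S1)-sets of reflections equals the number of families of
non-intersecting NE lattice paths `P_ℓ` from `(d+1-ℓ, d)` to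
`(d-κ_{σ(ℓ)}, κ_{σ(ℓ)}+i_{σ(ℓ)})` (here `ℓ = (ℓ' : Fin d) + 1`). -/
theorem number_maximal_S1_eq_number_path_families (n d : ℕ) (hd : 1 ≤ d) (hdn : d ≤ n)
    (τ i : ℕ → ℕ)
    (hbij : Set.BijOn τ (Set.Icc 1 n) (Set.Icc 1 n))
    (hmono1 : StrictMonoOn τ (Set.Icc 1 d))
    (hmono2 : StrictMonoOn τ (Set.Icc (d + 1) n))
    (hi : StrictMonoOn i (Set.Icc 1 d))
    (hiN : ∀ ℓ ∈ Set.Icc 1 d, i ℓ ∈ Set.Icc 1 n)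
    (hle : ∀ ℓ ∈ Set.Icc 1 d, τ ℓ ≤ i ℓ)
    (κ : ℕ → ℕ)
    (hκ : ∀ q, κ q = ((Finset.Icc 1 d).filter (fun ℓ => i q < τ ℓ)).card)
    (A E : ℕ → ℤ × ℤ)
    (hA : ∀ ℓ, A ℓ = ((d : ℤ) + 1 - ℓ, (d : ℤ)))
    (hE : ∀ q, E q = ((d : ℤ) - κ q, (κ q : ℤ) + i q)) :
    Set.ncard {S : Finset (ℕ × ℕ) |
        (∀ s ∈ S, 1 ≤ s.1 ∧ s.1 ≤ d ∧ d + 1 ≤ s.2 ∧ s.2 ≤ n) ∧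
        S1Prop d τ i S.val ∧
        ∀ s : ℕ × ℕ, s ∉ S → (1 ≤ s.1 ∧ s.1 ≤ d ∧ d + 1 ≤ s.2 ∧ s.2 ≤ n) →
          ¬ S1Prop d τ i (insert s S).val}
    = Set.ncard {P : Fin d → List (ℤ × ℤ) |
        ∃ σ : Equiv.Perm (Fin d),
          (∀ ℓ : Fin d, IsNEPathFrom (P ℓ) (A ((ℓ : ℕ) + 1)) (E ((σ ℓ : ℕ) + 1))) ∧
          ∀ k l : Fin d, k ≠ l → ∀ p ∈ P k, p ∉ P l} :=
  number_maximal_S1_eq_number_path_families_general hdn hbij hmono1.monotoneOn hmono2.monotoneOn hi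
    (fun ℓ hℓ => (hiN ℓ hℓ).2) κ hκ A E hA hE
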